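/- (Existence of a deadbeat observer gain.) If the pair (C,A) is observable, then there exists a matrix L ∈ ℝ^{n_x×n_y} such that (A − L C)^{n_x} = 0, i.e. A − L C is nilpotent. -/

import Mathlib

/-- The observability matrix `[Cᵀ, (CA)ᵀ, …, (CA^{n−1})ᵀ]ᵀ` with `n` block rows. -/
def obsMat {nx ny : ℕ} (n : ℕ) (A : Matrix (Fin nx) (Fin nx) ℝ)
    (C : Matrix (Fin ny) (Fin nx) ℝ) : Matrix (Fin n × Fin ny) (Fin nx) ℝ :=
  Matrix.of fun p j => (C * A ^ (p.1 : ℕ)) p.2 j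

/-!
A map `g` has the form `A - L C` exactly when it agrees with `A` on `ker C`, so the gain disappears
from the problem: one has to extend the restriction `A : ker C → V` to a nilpotent endomorphism
of `V`. Observability says that no nonzero subspace of `ker C` is mapped into itself, and under this
condition any linear map `f : p → V` on a subspace `p` of `V` has such an extension. By induction on
the dimension, the part of `f` that stays in `p`, a map `f⁻¹(p) → p`, extends to a nilpotent `g`
on `p`. There is a projection `π : V → p` with `π ∘ f = g`, since this prescribes the same values
on `p ∩ f(p)`, and then `f ∘ π` extends `f` and is nilpotent because `π ∘ f` is.
-/

open Module

section Semiring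

variable {R M N : Type*} [Semiring R] [AddCommMonoid M] [AddCommMonoid N] [Module R M] [Module R N]

theorem comp_pow_succ_eq (f : M →ₗ[R] N) (g : N →ₗ[R] M) (k : ℕ) :
    (f ∘ₗ g : End R N) ^ (k + 1) = f ∘ₗ ((g ∘ₗ f : End R M) ^ k) ∘ₗ g := by
  induction k with
  | zero => rw [zero_add, pow_one, pow_zero, End.one_eq_id, LinearMap.id_comp]
  | succ k ih =>
    rw [pow_succ', ih, pow_succ', End.mul_eq_comp, End.mul_eq_comp]
    simp only [LinearMap.comp_assoc]

/-- The unobservable subspace of the linear system `x⁺ = a x`, `y = c x`: the states producing zero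
output at every time `k : ℕ`. The pair `(c, a)` is observable when it is `⊥`. -/
def unobservableSubmodule (a : End R M) (c : M →ₗ[R] N) : Submodule R M :=
  ⨅ k : ℕ, LinearMap.ker (c ∘ₗ a ^ k)

theorem le_unobservableSubmodule {a : End R M} {c : M →ₗ[R] N} {q : Submodule R M}
    (hqa : q ∈ a.invtSubmodule) (hqc : q ≤ LinearMap.ker c) : q ≤ unobservableSubmodule a c :=
  le_iInf fun k _ hx ↦ hqc (q.le_comap_pow_of_le_comap hqa k hx)

theorem eq_bot_of_map_restrict_le {p : Submodule R M} {f : p →ₗ[R] M}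
    (h : ∀ q : Submodule R p, q.map f ≤ q.map p.subtype → q = ⊥)
    {q : Submodule R (p.comap f)}
    (hq : q.map (f.restrict (p := p.comap f) (q := p) fun _ ↦ id) ≤ q.map (p.comap f).subtype) :
    q = ⊥ := by
  have hmap : (q.map (p.comap f).subtype).map f ≤ (q.map (p.comap f).subtype).map p.subtype := by
    have hmono := Submodule.map_mono (f := p.subtype) hq
    rwa [← Submodule.map_comp, LinearMap.subtype_comp_restrict, LinearMap.domRestrict,
      Submodule.map_comp] at hmono
  simpa [← LinearMap.le_ker_iff_map] using h _ hmap

end Semiring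

section DivisionRing

variable {K U U' V W : Type*} [DivisionRing K] [AddCommGroup U] [AddCommGroup U'] [AddCommGroup V]
  [AddCommGroup W] [Module K U] [Module K U'] [Module K V] [Module K W]

theorem exists_comp_eq_of_ker_le {f : V →ₗ[K] W} {g : V →ₗ[K] U}
    (h : LinearMap.ker f ≤ LinearMap.ker g) : ∃ l : W →ₗ[K] U, l ∘ₗ f = g := by
  obtain ⟨l, hl⟩ := LinearMap.exists_extend
    ((LinearMap.ker f).liftQ g h ∘ₗ f.quotKerEquivRange.symm.toLinearMap)
  refine ⟨l, LinearMap.ext fun x ↦ ?_⟩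
  simpa [LinearMap.quotKerEquivRange_symm_apply_image] using
    LinearMap.congr_fun hl ⟨f x, LinearMap.mem_range_self f x⟩

theorem exists_comp_eq_and_comp_eq {i : U →ₗ[K] V} {f : U' →ₗ[K] V} {u : U →ₗ[K] W}
    {v : U' →ₗ[K] W} (h : ∀ x y, i x = f y → u x = v y) :
    ∃ π : V →ₗ[K] W, π ∘ₗ i = u ∧ π ∘ₗ f = v := by
  have hker : LinearMap.ker (i.coprod f) ≤ LinearMap.ker (u.coprod v) := by
    rintro ⟨x, y⟩ hxy
    have hxy' : i x = f (-y) := by simpa [eq_neg_iff_add_eq_zero] using hxy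
    simpa [eq_neg_iff_add_eq_zero] using h x (-y) hxy'
  obtain ⟨π, hπ⟩ := exists_comp_eq_of_ker_le hker
  refine ⟨π, ?_, ?_⟩
  · rw [← i.coprod_inl f, ← LinearMap.comp_assoc, hπ, LinearMap.coprod_inl]
  · rw [← i.coprod_inr f, ← LinearMap.comp_assoc, hπ, LinearMap.coprod_inr]

theorem exists_extend_pow_finrank_eq_zero [FiniteDimensional K V] {p : Submodule K V}
    (f : p →ₗ[K] V) (h : ∀ q : Submodule K p, q.map f ≤ q.map p.subtype → q = ⊥) :
    ∃ g : End K V, g ∘ₗ p.subtype = f ∧ g ^ finrank K V = 0 := by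
  induction hn : finrank K V using Nat.strong_induction_on generalizing V with
  | _ n ih =>
  obtain rfl | hp := eq_or_ne p ⊤
  · have hbot : (⊤ : Submodule K (⊤ : Submodule K V)) = ⊥ := h ⊤ (by simp)
    have : Subsingleton V :=
      Submodule.topEquiv.subsingleton_congr.1
        ((Submodule.subsingleton_iff K).1 (subsingleton_of_bot_eq_top hbot.symm))
    exact ⟨0, Subsingleton.elim _ _, Subsingleton.elim _ _⟩
  have hlt : finrank K p < n := hn ▸ Submodule.finrank_lt hp
  obtain ⟨g, hgf, hg⟩ := ih _ hlt
    (f.restrict (p := p.comap f) (q := p) fun _ ↦ id) (fun _ ↦ eq_bot_of_map_restrict_le h) rfl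
  obtain ⟨π, hπ, hπf⟩ : ∃ π : V →ₗ[K] p, π ∘ₗ p.subtype = LinearMap.id ∧ π ∘ₗ f = g := by
    refine exists_comp_eq_and_comp_eq fun x y hxy ↦ ?_
    have hy : y ∈ p.comap f := Submodule.mem_comap.2 (hxy ▸ x.2)
    exact (Subtype.ext hxy).trans (LinearMap.congr_fun hgf ⟨y, hy⟩).symm
  refine ⟨f ∘ₗ π, by rw [LinearMap.comp_assoc, hπ, LinearMap.comp_id], ?_⟩
  have hpow : (f ∘ₗ π : End K V) ^ (finrank K p + 1) = 0 := by
    rw [comp_pow_succ_eq, hπf, hg, LinearMap.zero_comp, LinearMap.comp_zero]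
  exact pow_eq_zero_of_le hlt hpow

theorem stmt_7_general [FiniteDimensional K V] (a : End K V) (c : V →ₗ[K] W)
    (h : unobservableSubmodule a c = ⊥) :
    ∃ l : W →ₗ[K] V, (a - l ∘ₗ c) ^ finrank K V = 0 := by
  obtain ⟨g, hga, hg⟩ :=
    exists_extend_pow_finrank_eq_zero (a ∘ₗ (LinearMap.ker c).subtype) fun q hq ↦ by
      rw [Submodule.map_comp, ← End.mem_invtSubmodule_iff_map_le] at hq
      have hbot := le_unobservableSubmodule hq (Submodule.map_subtype_le _ q)
      simpa [h, ← LinearMap.le_ker_iff_map] using hbot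
  obtain ⟨l, hl⟩ : ∃ l : W →ₗ[K] V, l ∘ₗ c = a - g :=
    exists_comp_eq_of_ker_le fun x hx ↦
      sub_eq_zero.2 (LinearMap.congr_fun hga ⟨x, hx⟩).symm
  exact ⟨l, by rwa [hl, sub_sub_cancel]⟩

end DivisionRing

theorem unobservableSubmodule_le_ker_obsMat {nx ny : ℕ} (n : ℕ) (A : Matrix (Fin nx) (Fin nx) ℝ)
    (C : Matrix (Fin ny) (Fin nx) ℝ) :
    unobservableSubmodule A.toLin' C.toLin' ≤ LinearMap.ker (obsMat n A C).mulVecLin := by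
  intro x hx
  funext ⟨k, i⟩
  have hk : C.toLin' ((A.toLin' ^ (k : ℕ)) x) = 0 := (Submodule.mem_iInf _).1 hx k
  rw [← Matrix.toLin'_pow, ← Matrix.toLin'_mul_apply] at hk
  exact congrFun hk i

theorem unobservableSubmodule_eq_bot_of_rank_obsMat {nx ny n : ℕ} {A : Matrix (Fin nx) (Fin nx) ℝ}
    {C : Matrix (Fin ny) (Fin nx) ℝ} (h : (obsMat n A C).rank = nx) :
    unobservableSubmodule A.toLin' C.toLin' = ⊥ := by
  refine le_bot_iff.1 ((unobservableSubmodule_le_ker_obsMat n A C).trans_eq ?_)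
  have hsum := (obsMat n A C).mulVecLin.finrank_range_add_finrank_ker
  rw [← Matrix.rank, h, finrank_fin_fun, Nat.add_eq_left] at hsum
  exact Submodule.finrank_eq_zero.1 hsum

/-- Existence of a deadbeat observer gain for an observable pair `(C, A)`. -/
theorem stmt_7 (nx ny : ℕ)
    (A : Matrix (Fin nx) (Fin nx) ℝ) (C : Matrix (Fin ny) (Fin nx) ℝ)
    (hobs : (obsMat nx A C).rank = nx) :
    ∃ L : Matrix (Fin nx) (Fin ny) ℝ, (A - L * C) ^ nx = 0 := by
  obtain ⟨l, hl⟩ := stmt_7_general _ _ (unobservableSubmodule_eq_bot_of_rank_obsMat hobs)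
  exact ⟨l.toMatrix', Matrix.toLin'.injective (by simpa [Matrix.toLin'_pow] using hl)⟩
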